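/- Let p and q be finite probability vectors. Then the following are equivalent: (i) for every ε > 0 there exist a finite probability vector q' with ‖q − q'‖₁ ≤ ε (padding with zeros to compare different lengths) and an integer n ≥ 1 such that p^{⊗n} majorizes (q')^{⊗n}; (ii) for every ε > 0 there exist a finite probability vector q' with ‖q − q'‖₁ ≤ ε and a finite probability vector r such that p ⊗ r majorizes q' ⊗ r; (iii) Σ_i p_i^α ≥ Σ_i q_i^α for every α ∈ [1, ∞) (equivalently, H_α(p) ≤ H_α(q) for all Rényi parameters α ≥ 1). -/

import Mathlib

open scoped BigOperators NNReal

noncomputable section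

/-- A probability vector on a finite index type. -/
def IsProbVec {ι : Type*} [Fintype ι] (p : ι → ℝ) : Prop :=
  (∀ i, 0 ≤ p i) ∧ ∑ i, p i = 1

/-- A (column-)stochastic matrix: nonnegative entries, every column sums to `1`. -/
def IsStochastic {ι κ : Type*} [Fintype ι] [Fintype κ] (T : ι → κ → ℝ) : Prop :=
  (∀ i j, 0 ≤ T i j) ∧ ∀ j, ∑ i, T i j = 1

/-- Matrix–vector multiplication. -/
def matVec {ι κ : Type*} [Fintype κ] (T : ι → κ → ℝ) (v : κ → ℝ) : ι → ℝ :=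
  fun i => ∑ j, T i j * v j

/-- Kronecker product of two vectors. -/
def kron {ι κ : Type*} (p : ι → ℝ) (q : κ → ℝ) : ι × κ → ℝ :=
  fun x => p x.1 * q x.2

/-- `n`-fold Kronecker power of a vector. -/
def kpow {ι : Type*} (p : ι → ℝ) (n : ℕ) : (Fin n → ι) → ℝ :=
  fun f => ∏ j, p (f j)

/-- Kronecker product reindexed along `Fin (m * n)`. -/
def kronFin {m n : ℕ} (p : Fin m → ℝ) (q : Fin n → ℝ) : Fin (m * n) → ℝ :=
  fun i => kron p q (finProdFinEquiv.symm i)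

/-- The sum of the `k` largest entries of a nonnegative vector, expressed as the
largest sum over subsets of cardinality at most `k`. -/
def topSum {ι : Type*} [Fintype ι] (p : ι → ℝ) (k : ℕ) : ℝ :=
  ⨆ s ∈ {s : Finset ι | s.card ≤ k}, ∑ i ∈ s, p i

/-- Majorization for nonnegative vectors (possibly of different lengths):
equal total sums, and for each `k` the sum of the `k` largest entries of `p` is
at least that of `q`. -/
def Majorizes {ι κ : Type*} [Fintype ι] [Fintype κ] (p : ι → ℝ) (q : κ → ℝ) : Prop :=
  (∑ i, p i = ∑ j, q j) ∧ ∀ k : ℕ, topSum q k ≤ topSum p k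

/-- The size of the support, `‖p‖₀`. -/
def supp0 {ι : Type*} [Fintype ι] (p : ι → ℝ) : ℕ :=
  (Finset.univ.filter fun i => p i ≠ 0).card

/-- Entrywise nonnegativity. -/
def NonnegVec {n : ℕ} (p : Fin n → ℝ) : Prop := ∀ i, 0 ≤ p i

/-- The modified majorization preorder `≽₀,₁`: majorization plus equality of
support sizes. -/
def MajMod {ι κ : Type*} [Fintype ι] [Fintype κ] (p : ι → ℝ) (q : κ → ℝ) : Prop :=
  Majorizes p q ∧ supp0 p = supp0 q

/-- `f_α(p) = ∑_{i ∈ supp p} (p i)^α`. -/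
def fA {ι : Type*} [Fintype ι] (α : ℝ) (p : ι → ℝ) : ℝ :=
  ∑ i, if p i = 0 then 0 else p i ^ α

/-- Shannon entropy (the terms with `p i = 0` vanish). -/
def H1ent {ι : Type*} [Fintype ι] (p : ι → ℝ) : ℝ := -∑ i, p i * Real.log (p i)

/-- `H₀'(p) = ∑_{i ∈ supp p} log p_i`. -/
def H0' {ι : Type*} [Fintype ι] (p : ι → ℝ) : ℝ :=
  ∑ i, if p i = 0 then 0 else Real.log (p i)

/-- Rényi entropy of order `α` (with `α = 1` the Shannon entropy). -/
def Hent {ι : Type*} [Fintype ι] (α : ℝ) (p : ι → ℝ) : ℝ :=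
  if α = 1 then -∑ i, p i * Real.log (p i)
  else (1 / (1 - α)) * Real.log (∑ i, if p i = 0 then 0 else p i ^ α)

/-- Min-entropy `H_∞(p) = - log max_i p_i`. -/
def HentInf {ι : Type*} [Fintype ι] (p : ι → ℝ) : ℝ := -Real.log (⨆ i, p i)

/-- Kullback–Leibler divergence (the terms with `p i = 0` vanish). -/
def KL {n : ℕ} (p q : Fin n → ℝ) : ℝ :=
  ∑ i, p i * Real.log (p i / q i)

/-- Rényi divergence of order `α` for vectors with common support. -/
def Renyi {n : ℕ} (α : ℝ) (p q : Fin n → ℝ) : ℝ :=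
  if α = 1 then ∑ i, p i * Real.log (p i / q i)
  else (1 / (α - 1)) * Real.log (∑ i, if p i = 0 then 0 else p i ^ α * q i ^ (1 - α))

/-- Max-divergence `D_∞(p‖q) = max_{i ∈ supp q} log (p_i / q_i)`. -/
def RenyiInf {n : ℕ} (p q : Fin n → ℝ) : ℝ :=
  ⨆ i ∈ Finset.univ.filter (fun i => q i ≠ 0), Real.log (p i / q i)

/-- Rényi divergence with values in the extended reals `[0, ∞]`. -/
def RenyiE {n : ℕ} (α : ℝ) (p q : Fin n → ℝ) : EReal :=
  if α = 1 then
    (if ∀ i, p i ≠ 0 → q i ≠ 0 then ((∑ i, p i * Real.log (p i / q i) : ℝ) : EReal) else ⊤)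
  else if α < 1 then
    (if ∃ i, p i ≠ 0 ∧ q i ≠ 0 then
      (((1 / (α - 1)) *
        Real.log (∑ i, if p i = 0 ∨ q i = 0 then 0 else p i ^ α * q i ^ (1 - α)) : ℝ) : EReal)
    else (⊤ : EReal))
  else
    (if ∀ i, p i ≠ 0 → q i ≠ 0 then
      (((1 / (α - 1)) *
        Real.log (∑ i, if p i = 0 then 0 else p i ^ α * q i ^ (1 - α)) : ℝ) : EReal)
    else (⊤ : EReal))

/-- The common support of a tuple of vectors. -/
def suppIdx {d n : ℕ} (P : Fin d → Fin n → ℝ) : Finset (Fin n) :=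
  Finset.univ.filter fun i => ∃ k, P k i ≠ 0

/-- `f_α(P) = ∑_{i ∈ I} ∏_k (p_i^{(k)})^{α_k}` with `I` the common support. -/
def fMat {d n : ℕ} (α : Fin d → ℝ) (P : Fin d → Fin n → ℝ) : ℝ :=
  ∑ i ∈ suppIdx P, ∏ k, P k i ^ α k

/-- The matrix `α`-divergence `D_α`. -/
def Dmat {d n : ℕ} (α : Fin d → ℝ) (P : Fin d → Fin n → ℝ) : ℝ :=
  (1 / ((⨆ k, α k) - 1)) * Real.log (∑ i ∈ suppIdx P, ∏ k, P k i ^ α k)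

/-- The tropical matrix divergence `D^𝕋_β`. -/
def DmatT {d n : ℕ} (β : Fin d → ℝ) (P : Fin d → Fin n → ℝ) : ℝ :=
  (1 / (⨆ k, β k)) * Real.log (⨆ i ∈ suppIdx P, ∏ k, P k i ^ β k)

/-- Membership in `A₊`: entries summing to `1`, all nonnegative. -/
def memAplus {d : ℕ} (α : Fin d → ℝ) : Prop := (∑ k, α k = 1) ∧ ∀ k, 0 ≤ α k

/-- Membership in `A₋`: entries summing to `1`, one entry `≥ 1`, the others `≤ 0`. -/
def memAminus {d : ℕ} (α : Fin d → ℝ) : Prop :=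
  (∑ k, α k = 1) ∧ ∃ k, 1 ≤ α k ∧ ∀ l, l ≠ k → α l ≤ 0

/-- Membership in `B₋`: entries summing to `0`, one entry `≥ 0`, the others `≤ 0`. -/
def memBminus {d : ℕ} (β : Fin d → ℝ) : Prop :=
  (∑ k, β k = 0) ∧ ∃ k, 0 ≤ β k ∧ ∀ l, l ≠ k → β l ≤ 0

/-- `α` is none of the standard basis vectors `e₁, …, e_d`. -/
def notBasis {d : ℕ} (α : Fin d → ℝ) : Prop := ∀ k, α ≠ Pi.single k 1

/-- ℓ¹-distance of two vectors, padding with zeros to a common length. -/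
def l1PadDist {m n : ℕ} (p : Fin m → ℝ) (q : Fin n → ℝ) : ℝ :=
  ∑ i : Fin (max m n),
    |(if h : (i : ℕ) < m then p ⟨(i : ℕ), h⟩ else 0) -
      (if h : (i : ℕ) < n then q ⟨(i : ℕ), h⟩ else 0)|

/-- Index type of the direct sum `⨁_{s=0}^{n-1} p^{⊗(n-1-s)} ⊗ q^{⊗s}`. -/
abbrev TrickIdx (m m' n : ℕ) : Type :=
  Σ s : Fin n, (Fin (n - 1 - (s : ℕ)) → Fin m) × (Fin (s : ℕ) → Fin m')

/-- The standard catalyst `(1/n) ⨁_{s=0}^{n-1} p^{⊗(n-1-s)} ⊗ q^{⊗s}`. -/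
def trick {m m' : ℕ} (p : Fin m → ℝ) (q : Fin m' → ℝ) (n : ℕ) : TrickIdx m m' n → ℝ :=
  fun x => (1 / (n : ℝ)) * (kpow p (n - 1 - (x.1 : ℕ)) x.2.1 * kpow q (x.1 : ℕ) x.2.2)

/-- A valid tuple: nonnegative entries and common support across the tuple. -/
def TupOK {d n : ℕ} (P : Fin d → Fin n → ℝ) : Prop :=
  (∀ k i, 0 ≤ P k i) ∧ ∀ k l i, P k i ≠ 0 ↔ P l i ≠ 0

/-- Matrix majorization of tuples: a single stochastic matrix carrying each column
of `P` to the corresponding column of `Q`. -/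
def TupMaj {d m n : ℕ} (P : Fin d → Fin m → ℝ) (Q : Fin d → Fin n → ℝ) : Prop :=
  ∃ T : Fin n → Fin m → ℝ, IsStochastic T ∧ ∀ k, matVec T (P k) = Q k

/-!
Majorization is decided by the sums of the `k` largest entries, so asymptotic majorization is a
question about the exponential growth of `topSum (kpow p n) k` with `k = exp (n κ)`. Hölder's
inequality bounds it from above by `k ^ (1 - 1 / α) * fA α p ^ (n / α)` for every `α ≥ 1`. The words
that are typical for the tilted vector with entries `p i ^ α / fA α p` show that the bound has the
right rate when `α` is chosen so that the entropy of the tilted vector is `κ`. Hence, if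
`fA α q ≤ fA α p` for all `α ≥ 1`, the top sums of `q^{⊗n}` exceed those of `p^{⊗n}` by at most a
subexponential factor. Scaling `q` by `c < 1` gains `c ^ n`, and spreading the mass `1 - c` over
very many new entries restores the normalization at no cost: the result is dominated by the average
of `p^{⊗n}` with the uniform vector.

From asymptotic to catalytic majorization, `p ⊗ r` and `q ⊗ r` for the direct sum `r` of the
products `p^{⊗(n-1-s)} ⊗ q^{⊗s}` have all blocks in common except `p^{⊗n}` and `q^{⊗n}`.
Conversely, `fA α` is multiplicative, so the catalyst cancels, it is continuous, and it is
Schur-convex because `x ^ α` is a positive mixture of the functions `max (x - t) 0`.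
-/

section TopSum

variable {ι κ : Type*} [Fintype ι] [Fintype κ] {p : ι → ℝ} {q : κ → ℝ}

lemma le_topSum (p : ι → ℝ) {k : ℕ} {S : Finset ι} (hS : S.card ≤ k) :
    ∑ i ∈ S, p i ≤ topSum p k := by
  refine le_ciSup_of_le (Set.finite_range _).bddAbove S ?_
  rw [ciSup_pos (by exact hS)]

lemma topSum_le {k : ℕ} {b : ℝ} (hb : 0 ≤ b)
    (h : ∀ S : Finset ι, S.card ≤ k → ∑ i ∈ S, p i ≤ b) : topSum p k ≤ b :=
  Real.iSup_le (fun S => Real.iSup_le (h S) hb) hb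

lemma topSum_nonneg (p : ι → ℝ) (k : ℕ) : 0 ≤ topSum p k := by
  simpa only [Finset.sum_empty] using le_topSum p (S := ∅) (Nat.zero_le k)

lemma topSum_zero (p : ι → ℝ) : topSum p 0 = 0 := by
  refine (topSum_le le_rfl fun S hS => ?_).antisymm (topSum_nonneg p 0)
  rw [Finset.card_eq_zero.1 (Nat.le_zero.1 hS), Finset.sum_empty]

lemma topSum_le_sum (hp : ∀ i, 0 ≤ p i) (k : ℕ) : topSum p k ≤ ∑ i, p i :=
  topSum_le (Finset.sum_nonneg fun i _ => hp i) fun _ _ =>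
    Finset.sum_le_univ_sum_of_nonneg hp

lemma sum_le_topSum (p : ι → ℝ) {k : ℕ} (hk : Fintype.card ι ≤ k) : ∑ i, p i ≤ topSum p k :=
  le_topSum p (S := Finset.univ) hk

lemma topSum_const_mul {c : ℝ} (hc : 0 ≤ c) (p : ι → ℝ) (k : ℕ) :
    topSum (fun i => c * p i) k = c * topSum p k := by
  simp only [topSum, Real.mul_iSup_of_nonneg hc, Finset.mul_sum]

lemma topSum_comp_equiv (e : κ ≃ ι) (p : ι → ℝ) (k : ℕ) : topSum (p ∘ e) k = topSum p k :=
  e.finsetCongr.iSup_congr fun S => by simp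

lemma topSum_le_topSum_comp_add (f : κ ↪ ι) {δ : ℝ} (hδ : 0 ≤ δ)
    (hp : ∀ i ∉ Set.range f, p i ≤ δ) (k : ℕ) : topSum p k ≤ topSum (p ∘ f) k + k * δ := by
  classical
  refine topSum_le (add_nonneg (topSum_nonneg _ _) (by positivity)) fun S hS => ?_
  have hinside : ∑ i ∈ S with i ∈ Set.range f, p i ≤ topSum (p ∘ f) k := by
    have himage : S.filter (· ∈ Set.range f) = (S.preimage f f.injective.injOn).map f := by
      ext i
      simp only [Finset.mem_filter, Set.mem_range, Finset.mem_map, Finset.mem_preimage]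
      aesop
    rw [himage, Finset.sum_map]
    refine le_topSum (p ∘ f) ?_
    rw [← Finset.card_map f, ← himage]
    exact (Finset.card_filter_le _ _).trans hS
  have houtside : ∑ i ∈ S with i ∉ Set.range f, p i ≤ k * δ := by
    calc ∑ i ∈ S with i ∉ Set.range f, p i
        ≤ (S.filter (· ∉ Set.range f)).card • δ :=
          Finset.sum_le_card_nsmul _ _ _ fun i hi => hp i (Finset.mem_filter.1 hi).2
      _ ≤ k * δ := by
          rw [nsmul_eq_mul]
          gcongr
          exact (Finset.card_filter_le _ _).trans hS
  rw [← Finset.sum_filter_add_sum_filter_not S (· ∈ Set.range f)]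
  exact add_le_add hinside houtside

lemma Majorizes.const_mul (h : Majorizes p q) {c : ℝ} (hc : 0 ≤ c) :
    Majorizes (fun i => c * p i) (fun j => c * q j) := by
  refine ⟨by rw [← Finset.mul_sum, ← Finset.mul_sum, h.1], fun k => ?_⟩
  rw [topSum_const_mul hc, topSum_const_mul hc]
  exact mul_le_mul_of_nonneg_left (h.2 k) hc

lemma Majorizes.comp_equiv {ι' κ' : Type*} [Fintype ι'] [Fintype κ'] (h : Majorizes p q)
    (e : ι' ≃ ι) (f : κ' ≃ κ) : Majorizes (p ∘ e) (q ∘ f) := by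
  refine ⟨?_, fun k => ?_⟩
  · simpa only [Function.comp_apply, e.sum_comp, f.sum_comp] using h.1
  · simpa only [topSum_comp_equiv] using h.2 k

end TopSum

section Excess

variable {ι κ : Type*} [Fintype ι] [Fintype κ] {p : ι → ℝ} {q : κ → ℝ}

/-- The total excess `∑ i, (p i - t)₊` of a vector over the level `t`. Since
`topSum p k` is the minimum of `k * t + excess p t` over `t ≥ 0`, it characterizes majorization
(`majorizes_iff_excess`), and unlike `topSum` it is additive over the entries. -/
def excess (p : ι → ℝ) (t : ℝ) : ℝ := ∑ i, max (p i - t) 0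

lemma excess_nonneg (p : ι → ℝ) (t : ℝ) : 0 ≤ excess p t :=
  Finset.sum_nonneg fun _ _ => le_max_right _ _

lemma sum_le_card_mul_add_excess (p : ι → ℝ) (S : Finset ι) (t : ℝ) :
    ∑ i ∈ S, p i ≤ S.card * t + excess p t := by
  calc ∑ i ∈ S, p i ≤ ∑ i ∈ S, (t + max (p i - t) 0) :=
        Finset.sum_le_sum fun i _ => by linarith [le_max_left (p i - t) 0]
    _ = S.card * t + ∑ i ∈ S, max (p i - t) 0 := by
        rw [Finset.sum_add_distrib, Finset.sum_const, nsmul_eq_mul]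
    _ ≤ S.card * t + excess p t :=
        add_le_add le_rfl (Finset.sum_le_univ_sum_of_nonneg fun _ => le_max_right _ _)

lemma topSum_le_mul_add_excess (p : ι → ℝ) (k : ℕ) {t : ℝ} (ht : 0 ≤ t) :
    topSum p k ≤ k * t + excess p t := by
  refine topSum_le (add_nonneg (by positivity) (excess_nonneg p t)) fun S hS => ?_
  refine (sum_le_card_mul_add_excess p S t).trans ?_
  gcongr

lemma exists_finset_card_eq_forall_notMem_le (p : ι → ℝ) {k : ℕ} (hk : k ≤ Fintype.card ι) :
    ∃ S : Finset ι, S.card = k ∧ ∀ i ∈ S, ∀ j ∉ S, p j ≤ p i := by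
  classical
  obtain ⟨S, hS, hmax⟩ := Finset.exists_max_image
    (Finset.powersetCard k (Finset.univ : Finset ι)) (fun S => ∑ i ∈ S, p i)
    (Finset.powersetCard_nonempty.2 hk)
  have hcard : S.card = k := (Finset.mem_powersetCard.1 hS).2
  refine ⟨S, hcard, fun i hi j hj => ?_⟩
  have hj' : j ∉ S.erase i := fun h => hj (Finset.mem_of_mem_erase h)
  have hswap := hmax (insert j (S.erase i)) (Finset.mem_powersetCard.2
    ⟨Finset.subset_univ _, by
      rw [Finset.card_insert_of_notMem hj', Finset.card_erase_add_one hi, hcard]⟩)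
  rw [Finset.sum_insert hj'] at hswap
  linarith [Finset.add_sum_erase S p hi]

lemma exists_mul_add_excess_le_topSum (hp : ∀ i, 0 ≤ p i) (k : ℕ) :
    ∃ t : ℝ, 0 ≤ t ∧ k * t + excess p t ≤ topSum p k := by
  rcases lt_or_ge (Fintype.card ι) k with hk | hk
  · refine ⟨0, le_rfl, ?_⟩
    simpa only [excess, mul_zero, zero_add, sub_zero, max_eq_left (hp _)]
      using sum_le_topSum p hk.le
  obtain ⟨S, rfl, hS⟩ := exists_finset_card_eq_forall_notMem_le p hk
  rcases S.eq_empty_or_nonempty with rfl | hne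
  · refine ⟨∑ i, p i, Finset.sum_nonneg fun i _ => hp i, ?_⟩
    have hle : ∀ i, p i - ∑ i, p i ≤ 0 := fun i =>
      sub_nonpos.2 (Finset.single_le_sum (fun i _ => hp i) (Finset.mem_univ i))
    simp only [excess, max_eq_right (hle _), Finset.card_empty, Nat.cast_zero, zero_mul,
      Finset.sum_const_zero, add_zero, topSum_nonneg]
  · obtain ⟨i₀, hi₀, hmin⟩ := Finset.exists_min_image S p hne
    refine ⟨p i₀, hp i₀, ?_⟩
    have hexcess : excess p (p i₀) = ∑ i ∈ S, (p i - p i₀) := by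
      rw [excess, ← Finset.sum_subset (Finset.subset_univ S) fun j _ hj =>
        max_eq_right (sub_nonpos.2 (hS i₀ hi₀ j hj))]
      exact Finset.sum_congr rfl fun i hi => max_eq_left (sub_nonneg.2 (hmin i hi))
    rw [hexcess, Finset.sum_sub_distrib, Finset.sum_const, nsmul_eq_mul, add_sub_cancel]
    exact le_topSum p le_rfl

lemma Majorizes.excess_le (h : Majorizes p q) {t : ℝ} (ht : 0 ≤ t) :
    excess q t ≤ excess p t := by
  set S := Finset.univ.filter (fun j => t < q j) with hS
  have hexcess : excess q t = ∑ j ∈ S, q j - S.card * t := by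
    rw [← nsmul_eq_mul, ← Finset.sum_const, ← Finset.sum_sub_distrib, hS, Finset.sum_filter]
    refine Finset.sum_congr rfl fun j _ => ?_
    split_ifs with hj
    · exact max_eq_left (sub_nonneg.2 hj.le)
    · exact max_eq_right (sub_nonpos.2 (not_lt.1 hj))
  have hchain : ∑ j ∈ S, q j ≤ S.card * t + excess p t :=
    ((le_topSum q le_rfl).trans (h.2 _)).trans (topSum_le_mul_add_excess p _ ht)
  linarith

lemma majorizes_iff_excess (hp : ∀ i, 0 ≤ p i) :
    Majorizes p q ↔ ∑ i, p i = ∑ j, q j ∧ ∀ t, 0 ≤ t → excess q t ≤ excess p t := by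
  refine ⟨fun h => ⟨h.1, fun t => h.excess_le⟩, fun ⟨hsum, h⟩ => ⟨hsum, fun k => ?_⟩⟩
  obtain ⟨t, ht, hle⟩ := exists_mul_add_excess_le_topSum hp k
  linarith [topSum_le_mul_add_excess q k ht, h t ht]

lemma mul_sum_le_topSum (hp : ∀ i, 0 ≤ p i) {k : ℕ} {S : Finset ι} {c : ℝ} (hc₀ : 0 ≤ c)
    (hc₁ : c ≤ 1) (hcS : c * S.card ≤ k) : c * ∑ i ∈ S, p i ≤ topSum p k := by
  obtain ⟨t, ht, hle⟩ := exists_mul_add_excess_le_topSum hp k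
  calc c * ∑ i ∈ S, p i ≤ c * (S.card * t + excess p t) := by
        gcongr
        exact sum_le_card_mul_add_excess p S t
    _ = c * S.card * t + c * excess p t := by ring
    _ ≤ k * t + excess p t := by
        gcongr
        exact mul_le_of_le_one_left (excess_nonneg p t) hc₁
    _ ≤ topSum p k := hle

end Excess

section ProbVec

variable {ι κ : Type*} [Fintype ι] [Fintype κ] {p : ι → ℝ} {q : κ → ℝ}

lemma IsProbVec.le_one (hp : IsProbVec p) (i : ι) : p i ≤ 1 :=
  hp.2 ▸ Finset.single_le_sum (fun i _ => hp.1 i) (Finset.mem_univ i)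

lemma IsProbVec.card_pos (hp : IsProbVec p) : 0 < Fintype.card ι := by
  refine Fintype.card_pos_iff.2 (not_isEmpty_iff.1 fun _ => ?_)
  simpa only [Finset.univ_eq_empty, Finset.sum_empty, zero_ne_one] using hp.2

lemma IsProbVec.comp_equiv (hp : IsProbVec p) (e : κ ≃ ι) : IsProbVec (p ∘ e) :=
  ⟨fun _ => hp.1 _, (e.sum_comp p).trans hp.2⟩

lemma div_card_le_topSum (hp : IsProbVec p) {k : ℕ} (hk : k ≤ Fintype.card ι) :
    (k : ℝ) / Fintype.card ι ≤ topSum p k := by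
  have hcard : (0 : ℝ) < Fintype.card ι := by exact_mod_cast hp.card_pos
  have hratio : (k : ℝ) / Fintype.card ι ≤ 1 :=
    div_le_one_of_le₀ (by exact_mod_cast hk) hcard.le
  simpa only [hp.2, mul_one] using mul_sum_le_topSum hp.1 (S := Finset.univ) (by positivity) hratio
    (by rw [Finset.card_univ, div_mul_cancel₀ _ hcard.ne'])

lemma majorizes_of_topSum_le_midpoint (hp : IsProbVec p) (hq : IsProbVec q)
    (h : ∀ k : ℕ, topSum q k ≤ (topSum p k + k / Fintype.card ι) / 2) : Majorizes p q := by
  refine ⟨hp.2.trans hq.2.symm, fun k => ?_⟩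
  rcases le_total k (Fintype.card ι) with hk | hk
  · linarith [h k, div_card_le_topSum hp hk]
  · calc topSum q k ≤ ∑ j, q j := topSum_le_sum hq.1 k
      _ = ∑ i, p i := hq.2.trans hp.2.symm
      _ ≤ topSum p k := sum_le_topSum p hk

end ProbVec

section KroneckerPower

variable {ι : Type*}

lemma kpow_cons (p : ι → ℝ) (n : ℕ) (i : ι) (x : Fin n → ι) :
    kpow p (n + 1) (Fin.cons i x : Fin (n + 1) → ι) = p i * kpow p n x := by
  simp only [kpow, Fin.prod_univ_succ, Fin.cons_zero, Fin.cons_succ]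

lemma kpow_nonneg {p : ι → ℝ} (hp : ∀ i, 0 ≤ p i) (n : ℕ) (x : Fin n → ι) : 0 ≤ kpow p n x :=
  Finset.prod_nonneg fun _ _ => hp _

lemma kpow_rpow {p : ι → ℝ} (hp : ∀ i, 0 ≤ p i) (α : ℝ) (n : ℕ) (x : Fin n → ι) :
    kpow p n x ^ α = kpow (fun i => p i ^ α) n x :=
  (Real.finsetProd_rpow _ _ (fun _ _ => hp _) α).symm

lemma kpow_eq_exp_sum_log {p : ι → ℝ} (hp : ∀ i, 0 ≤ p i) {n : ℕ} {x : Fin n → ι}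
    (hx : kpow p n x ≠ 0) : kpow p n x = Real.exp (∑ j, Real.log (p (x j))) := by
  rw [← Real.log_prod (Finset.prod_ne_zero_iff.1 hx)]
  exact (Real.exp_log ((kpow_nonneg hp n x).lt_of_ne' hx)).symm

variable [Fintype ι]

lemma sum_fin_succ_arrow {M : Type*} [AddCommMonoid M] (n : ℕ) (F : (Fin (n + 1) → ι) → M) :
    ∑ x, F x = ∑ i, ∑ y : Fin n → ι, F (Fin.cons i y) := by
  rw [← (Fin.consEquiv fun _ : Fin (n + 1) => ι).sum_comp, Fintype.sum_prod_type]
  rfl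

lemma sum_kpow (p : ι → ℝ) (n : ℕ) : ∑ x, kpow p n x = (∑ i, p i) ^ n :=
  (Fintype.sum_pow p n).symm

lemma isProbVec_kpow {p : ι → ℝ} (hp : IsProbVec p) (n : ℕ) : IsProbVec (kpow p n) :=
  ⟨kpow_nonneg hp.1 n, by rw [sum_kpow, hp.2, one_pow]⟩

lemma IsProbVec.kpow_le {p : ι → ℝ} (hp : IsProbVec p) {n : ℕ} (x : Fin n → ι) (j : Fin n) :
    kpow p n x ≤ p (x j) := by
  rw [kpow, ← Finset.mul_prod_erase _ _ (Finset.mem_univ j)]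
  exact mul_le_of_le_one_right (hp.1 _)
    (Finset.prod_le_one (fun _ _ => hp.1 _) fun _ _ => hp.le_one _)

end KroneckerPower

section PowerSum

variable {ι κ : Type*} [Fintype ι] [Fintype κ] {p : ι → ℝ} {q : κ → ℝ} {α : ℝ}

lemma fA_eq_sum_rpow (hα : α ≠ 0) (p : ι → ℝ) : fA α p = ∑ i, p i ^ α := by
  refine Finset.sum_congr rfl fun i _ => ?_
  split_ifs with h
  · rw [h, Real.zero_rpow hα]
  · rfl

lemma fA_one (p : ι → ℝ) : fA 1 p = ∑ i, p i := by
  simp only [fA_eq_sum_rpow one_ne_zero, Real.rpow_one]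

lemma ite_rpow_nonneg {x : ℝ} (hx : 0 ≤ x) (α : ℝ) : 0 ≤ if x = 0 then 0 else x ^ α := by
  split_ifs
  exacts [le_rfl, Real.rpow_nonneg hx α]

lemma fA_nonneg (hp : ∀ i, 0 ≤ p i) (α : ℝ) : 0 ≤ fA α p :=
  Finset.sum_nonneg fun i _ => ite_rpow_nonneg (hp i) α

lemma IsProbVec.fA_pos (hp : IsProbVec p) (α : ℝ) : 0 < fA α p := by
  obtain ⟨i, -, hi⟩ : ∃ i ∈ Finset.univ, p i ≠ 0 :=
    Finset.exists_ne_zero_of_sum_ne_zero (hp.2.trans_ne one_ne_zero)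
  refine Finset.sum_pos' (fun i _ => ite_rpow_nonneg (hp.1 i) α) ⟨i, Finset.mem_univ i, ?_⟩
  rw [if_neg hi]
  exact Real.rpow_pos_of_pos ((hp.1 i).lt_of_ne' hi) α

lemma fA_kron (hα : α ≠ 0) (hp : ∀ i, 0 ≤ p i) (hq : ∀ j, 0 ≤ q j) :
    fA α (kron p q) = fA α p * fA α q := by
  simp only [fA_eq_sum_rpow hα, kron, Real.mul_rpow (hp _) (hq _), Fintype.sum_prod_type,
    Finset.sum_mul_sum]

lemma fA_kpow (hα : α ≠ 0) (hp : ∀ i, 0 ≤ p i) (n : ℕ) : fA α (kpow p n) = fA α p ^ n := by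
  simp only [fA_eq_sum_rpow hα, kpow_rpow hp, sum_kpow]

lemma topSum_rpow_le_mul_fA (hp : ∀ i, 0 ≤ p i) (hα : 1 ≤ α) (k : ℕ) :
    topSum p k ^ α ≤ (k : ℝ) ^ (α - 1) * fA α p := by
  have hα₀ : 0 < α := zero_lt_one.trans_le hα
  have hbound : 0 ≤ (k : ℝ) ^ (α - 1) * fA α p := mul_nonneg (by positivity) (fA_nonneg hp α)
  rw [← Real.le_rpow_inv_iff_of_pos (topSum_nonneg p k) hbound hα₀]
  refine topSum_le (Real.rpow_nonneg hbound _) fun S hS => ?_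
  rw [Real.le_rpow_inv_iff_of_pos (Finset.sum_nonneg fun i _ => hp i) hbound hα₀]
  calc (∑ i ∈ S, p i) ^ α ≤ (S.card : ℝ) ^ (α - 1) * ∑ i ∈ S, p i ^ α :=
        Real.rpow_sum_le_const_mul_sum_rpow_of_nonneg S hα fun i _ => hp i
    _ ≤ (k : ℝ) ^ (α - 1) * fA α p := by
        rw [fA_eq_sum_rpow hα₀.ne']
        gcongr
        · exact Finset.sum_nonneg fun i _ => Real.rpow_nonneg (hp i) α
        · exact fun i _ _ => Real.rpow_nonneg (hp i) α
        · exact Finset.subset_univ S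

end PowerSum

section SchurConvexity

variable {ι κ : Type*} [Fintype ι] [Fintype κ] {p : ι → ℝ} {q : κ → ℝ} {α : ℝ}

lemma intervalIntegrable_max_sub_mul_rpow (hα : 1 < α) (x a b : ℝ) :
    IntervalIntegrable (fun t : ℝ => max (x - t) 0 * t ^ (α - 2)) MeasureTheory.volume a b :=
  (intervalIntegral.intervalIntegrable_rpow' (by linarith)).continuousOn_mul (by fun_prop)

lemma integral_sub_mul_rpow (hα : 1 < α) {x : ℝ} (hx : 0 ≤ x) :
    ∫ t in (0 : ℝ)..x, (x - t) * t ^ (α - 2) = x ^ α / (α * (α - 1)) := by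
  have hα₁ : α - 1 ≠ 0 := by linarith
  have hα₀ : α ≠ 0 := by linarith
  have hexpand : Set.EqOn (fun t : ℝ => (x - t) * t ^ (α - 2))
      (fun t => x * t ^ (α - 2) - t ^ (α - 1)) (Set.uIcc 0 x) := fun t ht => by
    rw [Set.uIcc_of_le hx] at ht
    simp only
    rw [sub_mul, show α - 1 = 1 + (α - 2) by ring,
      Real.rpow_one_add' ht.1 (by rwa [show 1 + (α - 2) = α - 1 by ring])]
  have hpow : x ^ α = x * x ^ (α - 1) := by
    rw [← Real.rpow_one_add' hx (by rwa [add_sub_cancel]), add_sub_cancel]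
  rw [intervalIntegral.integral_congr hexpand, intervalIntegral.integral_sub
      ((intervalIntegral.intervalIntegrable_rpow' (by linarith)).const_mul x)
      (intervalIntegral.intervalIntegrable_rpow' (by linarith)),
    intervalIntegral.integral_const_mul, integral_rpow (Or.inl (by linarith)),
    integral_rpow (Or.inl (by linarith)), show α - 2 + 1 = α - 1 by ring, sub_add_cancel,
    Real.zero_rpow hα₁, Real.zero_rpow hα₀, hpow]
  field_simp
  ring

lemma integral_max_sub_mul_rpow (hα : 1 < α) {x b : ℝ} (hx : 0 ≤ x) (hxb : x ≤ b) :
    ∫ t in (0 : ℝ)..b, max (x - t) 0 * t ^ (α - 2) = x ^ α / (α * (α - 1)) := by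
  have hbelow : Set.EqOn (fun t : ℝ => max (x - t) 0 * t ^ (α - 2))
      (fun t => (x - t) * t ^ (α - 2)) (Set.uIcc 0 x) := fun t ht => by
    rw [Set.uIcc_of_le hx] at ht
    simp only [max_eq_left (sub_nonneg.2 ht.2)]
  have habove : Set.EqOn (fun t : ℝ => max (x - t) 0 * t ^ (α - 2)) (fun _ => 0)
      (Set.uIcc x b) := fun t ht => by
    rw [Set.uIcc_of_le hxb] at ht
    simp only [max_eq_right (sub_nonpos.2 ht.1), zero_mul]
  rw [← intervalIntegral.integral_add_adjacent_intervals
      (intervalIntegrable_max_sub_mul_rpow hα x 0 x) (intervalIntegrable_max_sub_mul_rpow hα x x b),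
    intervalIntegral.integral_congr hbelow, intervalIntegral.integral_congr habove,
    intervalIntegral.integral_zero, add_zero, integral_sub_mul_rpow hα hx]

lemma intervalIntegrable_excess_mul_rpow (hα : 1 < α) (p : ι → ℝ) (a b : ℝ) :
    IntervalIntegrable (fun t => excess p t * t ^ (α - 2)) MeasureTheory.volume a b := by
  simp only [excess, Finset.sum_mul]
  simpa only [Finset.sum_fn] using
    IntervalIntegrable.sum Finset.univ fun i _ => intervalIntegrable_max_sub_mul_rpow hα (p i) a b

lemma integral_excess_mul_rpow (hα : 1 < α) (hp : ∀ i, 0 ≤ p i) {b : ℝ} (hb : ∀ i, p i ≤ b) :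
    ∫ t in (0 : ℝ)..b, excess p t * t ^ (α - 2) = fA α p / (α * (α - 1)) := by
  simp only [excess, Finset.sum_mul]
  rw [intervalIntegral.integral_finsetSum fun i _ =>
      intervalIntegrable_max_sub_mul_rpow hα (p i) 0 b,
    fA_eq_sum_rpow (by linarith), Finset.sum_div]
  exact Finset.sum_congr rfl fun i _ => integral_max_sub_mul_rpow hα (hp i) (hb i)

lemma Majorizes.fA_le (h : Majorizes p q) (hp : ∀ i, 0 ≤ p i) (hq : ∀ j, 0 ≤ q j)
    (hα : 1 ≤ α) : fA α q ≤ fA α p := by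
  rcases hα.eq_or_lt with rfl | hα
  · rw [fA_one, fA_one, h.1]
  have hpb : ∀ i, p i ≤ ∑ i, p i := fun i =>
    Finset.single_le_sum (fun i _ => hp i) (Finset.mem_univ i)
  have hqb : ∀ j, q j ≤ ∑ i, p i := fun j =>
    h.1 ▸ Finset.single_le_sum (fun j _ => hq j) (Finset.mem_univ j)
  have hden : 0 < α * (α - 1) := mul_pos (by linarith) (by linarith)
  rw [← div_le_div_iff_of_pos_right hden, ← integral_excess_mul_rpow hα hp hpb,
    ← integral_excess_mul_rpow hα hq hqb]
  exact intervalIntegral.integral_mono_on (Finset.sum_nonneg fun i _ => hp i)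
    (intervalIntegrable_excess_mul_rpow hα q _ _) (intervalIntegrable_excess_mul_rpow hα p _ _)
    fun t ht => mul_le_mul_of_nonneg_right (h.excess_le ht.1) (Real.rpow_nonneg ht.1 _)

end SchurConvexity

section Catalyst

lemma kron_nonneg {ι κ : Type*} {p : ι → ℝ} {q : κ → ℝ} (hp : ∀ i, 0 ≤ p i)
    (hq : ∀ j, 0 ≤ q j) (x : ι × κ) : 0 ≤ kron p q x :=
  mul_nonneg (hp _) (hq _)

variable {m m' : ℕ} {p : Fin m → ℝ} {q : Fin m' → ℝ}

/-- The sum of `g` over the entries of `(1/n) p^{⊗a} ⊗ q^{⊗b}`. -/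
def sumMixedPower (g : ℝ → ℝ) (p : Fin m → ℝ) (q : Fin m' → ℝ) (n a b : ℕ) : ℝ :=
  ∑ x : Fin a → Fin m, ∑ y : Fin b → Fin m', g (1 / (n : ℝ) * (kpow p a x * kpow q b y))

lemma sumMixedPower_zero_right (g : ℝ → ℝ) (p : Fin m → ℝ) (q : Fin m' → ℝ) (n a : ℕ) :
    sumMixedPower g p q n a 0 = ∑ x, g (1 / (n : ℝ) * kpow p a x) := by
  simp only [sumMixedPower, Fintype.sum_unique, kpow, Finset.univ_eq_empty, Finset.prod_empty,
    mul_one]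

lemma sumMixedPower_zero_left (g : ℝ → ℝ) (p : Fin m → ℝ) (q : Fin m' → ℝ) (n b : ℕ) :
    sumMixedPower g p q n 0 b = ∑ y, g (1 / (n : ℝ) * kpow q b y) := by
  simp only [sumMixedPower, Fintype.sum_unique, kpow, Finset.univ_eq_empty, Finset.prod_empty,
    one_mul]

lemma sum_trick (g : ℝ → ℝ) (p : Fin m → ℝ) (q : Fin m' → ℝ) (n : ℕ) :
    ∑ x, g (trick p q n x) = ∑ s : Fin n, sumMixedPower g p q n (n - 1 - s) s := by
  simp only [Fintype.sum_sigma, Fintype.sum_prod_type, trick, sumMixedPower]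

lemma sum_kron_trick_left (g : ℝ → ℝ) (p : Fin m → ℝ) (q : Fin m' → ℝ) (n : ℕ) :
    ∑ x, g (kron p (trick p q n) x) =
      ∑ s : Fin n, sumMixedPower g p q n (n - 1 - s + 1) s := by
  simp only [Fintype.sum_prod_type, Fintype.sum_sigma, sumMixedPower, sum_fin_succ_arrow,
    kpow_cons, kron, trick]
  rw [Finset.sum_comm]
  refine Finset.sum_congr rfl fun s _ => Finset.sum_congr rfl fun i _ =>
    Finset.sum_congr rfl fun x _ => Finset.sum_congr rfl fun y _ => congrArg g ?_
  ring

lemma sum_kron_trick_right (g : ℝ → ℝ) (p : Fin m → ℝ) (q : Fin m' → ℝ) (n : ℕ) :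
    ∑ x, g (kron q (trick p q n) x) =
      ∑ s : Fin n, sumMixedPower g p q n (n - 1 - s) (s + 1) := by
  simp only [Fintype.sum_prod_type, Fintype.sum_sigma, sumMixedPower, sum_fin_succ_arrow,
    kpow_cons, kron, trick]
  rw [Finset.sum_comm]
  refine Finset.sum_congr rfl fun s _ => ?_
  rw [Finset.sum_comm]
  refine Finset.sum_congr rfl fun x _ => Finset.sum_congr rfl fun i _ =>
    Finset.sum_congr rfl fun y _ => congrArg g ?_
  ring

lemma sum_kron_trick_add_sum_kpow (g : ℝ → ℝ) (p : Fin m → ℝ) (q : Fin m' → ℝ) (n : ℕ) :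
    ∑ x, g (kron p (trick p q n) x) + ∑ y, g (1 / (n : ℝ) * kpow q n y) =
      ∑ x, g (kron q (trick p q n) x) + ∑ x, g (1 / (n : ℝ) * kpow p n x) := by
  set G : ℕ → ℝ := fun s => sumMixedPower g p q n (n - s) s with hG
  have hleft : ∑ x, g (kron p (trick p q n) x) = ∑ s ∈ Finset.range n, G s := by
    rw [sum_kron_trick_left, ← Fin.sum_univ_eq_sum_range]
    exact Finset.sum_congr rfl fun s _ => by rw [hG, show n - 1 - (s : ℕ) + 1 = n - s by omega]
  have hright : ∑ x, g (kron q (trick p q n) x) = ∑ s ∈ Finset.range n, G (s + 1) := by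
    rw [sum_kron_trick_right, ← Fin.sum_univ_eq_sum_range (fun s => G (s + 1))]
    exact Finset.sum_congr rfl fun s _ => by
      simp only [hG, show n - 1 - (s : ℕ) = n - (s + 1) by omega]
  have hq : ∑ y, g (1 / (n : ℝ) * kpow q n y) = G n := by
    simp only [hG, Nat.sub_self, sumMixedPower_zero_left]
  have hp : ∑ x, g (1 / (n : ℝ) * kpow p n x) = G 0 := by
    simp only [hG, Nat.sub_zero, sumMixedPower_zero_right]
  rw [hleft, hright, hq, hp, ← Finset.sum_range_succ, Finset.sum_range_succ']

lemma trick_nonneg (hp : ∀ i, 0 ≤ p i) (hq : ∀ j, 0 ≤ q j) (n : ℕ) (x : TrickIdx m m' n) :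
    0 ≤ trick p q n x :=
  mul_nonneg (by positivity) (mul_nonneg (kpow_nonneg hp _ _) (kpow_nonneg hq _ _))

lemma isProbVec_trick (hp : IsProbVec p) (hq : IsProbVec q) {n : ℕ} (hn : n ≠ 0) :
    IsProbVec (trick p q n) := by
  refine ⟨trick_nonneg hp.1 hq.1 n, (sum_trick id p q n).trans ?_⟩
  have hpart : ∀ a b, sumMixedPower id p q n a b = 1 / n := fun a b => by
    simp only [sumMixedPower, id_eq, ← Finset.mul_sum, (isProbVec_kpow hq b).2,
      (isProbVec_kpow hp a).2, mul_one]
  have hn₀ : (n : ℝ) ≠ 0 := by exact_mod_cast hn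
  rw [Finset.sum_congr rfl fun s _ => hpart _ _, Finset.sum_const, Finset.card_univ,
    Fintype.card_fin, nsmul_eq_mul, mul_one_div_cancel hn₀]

lemma Majorizes.kron_trick (hp : ∀ i, 0 ≤ p i) (hq : ∀ j, 0 ≤ q j) {n : ℕ}
    (h : Majorizes (kpow p n) (kpow q n)) :
    Majorizes (kron p (trick p q n)) (kron q (trick p q n)) := by
  have hscaled := h.const_mul (c := 1 / (n : ℝ)) (by positivity)
  refine (majorizes_iff_excess (kron_nonneg hp (trick_nonneg hp hq n))).2 ⟨?_, fun t ht => ?_⟩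
  · have hexchange := sum_kron_trick_add_sum_kpow id p q n
    simp only [id_eq] at hexchange
    linarith [hscaled.1]
  · have hexchange := sum_kron_trick_add_sum_kpow (fun y => max (y - t) 0) p q n
    have hexcess := hscaled.excess_le ht
    simp only [excess] at hexcess ⊢
    linarith

lemma exists_catalyst_of_majorizes_kpow (hp : IsProbVec p) (hq : IsProbVec q) {n : ℕ}
    (hn : n ≠ 0) (h : Majorizes (kpow p n) (kpow q n)) :
    ∃ (ρ : ℕ) (r : Fin ρ → ℝ), IsProbVec r ∧ Majorizes (kron p r) (kron q r) := by
  let e := (Fintype.equivFin (TrickIdx m m' n)).symm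
  exact ⟨_, trick p q n ∘ e, (isProbVec_trick hp hq hn).comp_equiv e,
    (h.kron_trick hp.1 hq.1).comp_equiv ((Equiv.refl _).prodCongr e) ((Equiv.refl _).prodCongr e)⟩

end Catalyst

section Padding

variable {m m' : ℕ}

/-- A vector viewed as a finitely supported sequence, by padding with zeros. -/
def zeroExtend (p : Fin m → ℝ) (i : ℕ) : ℝ := if h : i < m then p ⟨i, h⟩ else 0

lemma l1PadDist_eq_sum_range (p : Fin m → ℝ) (q : Fin m' → ℝ) :
    l1PadDist p q = ∑ i ∈ Finset.range (max m m'), |zeroExtend p i - zeroExtend q i| :=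
  Fin.sum_univ_eq_sum_range (fun i => |zeroExtend p i - zeroExtend q i|) _

lemma zeroExtend_mem_Icc {p : Fin m → ℝ} (hp : IsProbVec p) (i : ℕ) :
    zeroExtend p i ∈ Set.Icc (0 : ℝ) 1 := by
  rw [zeroExtend]
  split_ifs
  exacts [⟨hp.1 _, hp.le_one _⟩, ⟨le_rfl, zero_le_one⟩]

lemma sum_range_zeroExtend_rpow {M : ℕ} (hM : m ≤ M) (p : Fin m → ℝ) {α : ℝ} (hα : α ≠ 0) :
    ∑ i ∈ Finset.range M, zeroExtend p i ^ α = fA α p := by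
  obtain ⟨d, rfl⟩ := Nat.exists_eq_add_of_le hM
  rw [fA_eq_sum_rpow hα, ← Fin.sum_univ_eq_sum_range (fun i => zeroExtend p i ^ α),
    Fin.sum_univ_add]
  simp [zeroExtend, Real.zero_rpow hα]

lemma l1PadDist_append (p v : Fin m → ℝ) {N : ℕ} (w : Fin N → ℝ) :
    l1PadDist p (Fin.append v w) = ∑ i, |p i - v i| + ∑ j, |w j| := by
  rw [l1PadDist_eq_sum_range, max_eq_right (Nat.le_add_right m N), ← Fin.sum_univ_eq_sum_range
    (fun i => |zeroExtend p i - zeroExtend (Fin.append v w) i|), Fin.sum_univ_add]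
  congr 1
  · refine Finset.sum_congr rfl fun i _ => ?_
    have hp : zeroExtend p (Fin.castAdd N i) = p i := dif_pos i.2
    have happend : zeroExtend (Fin.append v w) (Fin.castAdd N i) = v i :=
      (dif_pos (Fin.castAdd N i).2).trans (Fin.append_left v w i)
    rw [hp, happend]
  · refine Finset.sum_congr rfl fun j _ => ?_
    have hp : zeroExtend p (Fin.natAdd m j) = 0 := dif_neg (by simp)
    have happend : zeroExtend (Fin.append v w) (Fin.natAdd m j) = w j :=
      (dif_pos (Fin.natAdd m j).2).trans (Fin.append_right v w j)
    rw [hp, happend, zero_sub, abs_neg]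

lemma abs_rpow_sub_rpow_le {α x y : ℝ} (hα : 1 ≤ α) (hx : x ∈ Set.Icc (0 : ℝ) 1)
    (hy : y ∈ Set.Icc (0 : ℝ) 1) : |x ^ α - y ^ α| ≤ α * |x - y| := by
  refine (convex_Icc (0 : ℝ) 1).norm_image_sub_le_of_norm_hasDerivWithin_le
    (fun t _ => (Real.hasDerivAt_rpow_const (Or.inr hα)).hasDerivWithinAt) (fun t ht => ?_) hy hx
  have hα₀ : 0 ≤ α := zero_le_one.trans hα
  rw [Real.norm_of_nonneg (mul_nonneg hα₀ (Real.rpow_nonneg ht.1 _))]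
  exact mul_le_of_le_one_right hα₀ (Real.rpow_le_one ht.1 ht.2 (sub_nonneg.2 hα))

lemma fA_le_fA_add_mul_l1PadDist {p : Fin m → ℝ} {q : Fin m' → ℝ} (hp : IsProbVec p)
    (hq : IsProbVec q) {α : ℝ} (hα : 1 ≤ α) : fA α p ≤ fA α q + α * l1PadDist p q := by
  have hα₀ : α ≠ 0 := (zero_lt_one.trans_le hα).ne'
  rw [← sum_range_zeroExtend_rpow (le_max_left m m') p hα₀,
    ← sum_range_zeroExtend_rpow (le_max_right m m') q hα₀, l1PadDist_eq_sum_range,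
    Finset.mul_sum, ← Finset.sum_add_distrib]
  exact Finset.sum_le_sum fun i _ => sub_le_iff_le_add'.1 <| (le_abs_self _).trans <|
    abs_rpow_sub_rpow_le hα (zeroExtend_mem_Icc hp i) (zeroExtend_mem_Icc hq i)

end Padding

section WeakLaw

variable {ι : Type*} [Fintype ι] {w : ι → ℝ} {f : ι → ℝ}

lemma sum_kpow_mul_sum (hw : ∑ i, w i = 1) (f : ι → ℝ) (n : ℕ) :
    ∑ x, kpow w n x * ∑ j, f (x j) = n * ∑ i, w i * f i := by
  induction n with
  | zero => simp
  | succ n ih =>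
    have hsum : ∑ y, kpow w n y = 1 := by rw [sum_kpow, hw, one_pow]
    have hinner : ∀ i, ∑ y, w i * kpow w n y * (f i + ∑ j, f (y j)) =
        w i * f i + w i * (n * ∑ i, w i * f i) := fun i => by
      calc ∑ y, w i * kpow w n y * (f i + ∑ j, f (y j))
          = w i * f i * ∑ y, kpow w n y + w i * ∑ y, kpow w n y * ∑ j, f (y j) := by
            rw [Finset.mul_sum, Finset.mul_sum, ← Finset.sum_add_distrib]
            exact Finset.sum_congr rfl fun y _ => by ring
        _ = w i * f i + w i * (n * ∑ i, w i * f i) := by rw [hsum, ih, mul_one]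
    simp only [sum_fin_succ_arrow, kpow_cons, Fin.sum_univ_succ, Fin.cons_zero, Fin.cons_succ,
      hinner]
    rw [Finset.sum_add_distrib, ← Finset.sum_mul, hw]
    push_cast
    ring

lemma sum_kpow_mul_sum_sq (hw : ∑ i, w i = 1) (hf : ∑ i, w i * f i = 0) (n : ℕ) :
    ∑ x, kpow w n x * (∑ j, f (x j)) ^ 2 = n * ∑ i, w i * f i ^ 2 := by
  induction n with
  | zero => simp
  | succ n ih =>
    have hsum : ∑ y, kpow w n y = 1 := by rw [sum_kpow, hw, one_pow]
    have hinner : ∀ i, ∑ y, w i * kpow w n y * (f i + ∑ j, f (y j)) ^ 2 =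
        w i * f i ^ 2 + w i * (n * ∑ i, w i * f i ^ 2) := fun i => by
      calc ∑ y, w i * kpow w n y * (f i + ∑ j, f (y j)) ^ 2
          = w i * f i ^ 2 * ∑ y, kpow w n y + 2 * w i * f i * ∑ y, kpow w n y * ∑ j, f (y j) +
              w i * ∑ y, kpow w n y * (∑ j, f (y j)) ^ 2 := by
            rw [Finset.mul_sum, Finset.mul_sum, Finset.mul_sum, ← Finset.sum_add_distrib,
              ← Finset.sum_add_distrib]
            exact Finset.sum_congr rfl fun y _ => by ring
        _ = w i * f i ^ 2 + w i * (n * ∑ i, w i * f i ^ 2) := by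
            rw [hsum, ih, sum_kpow_mul_sum hw, hf]
            ring
    simp only [sum_fin_succ_arrow, kpow_cons, Fin.sum_univ_succ, Fin.cons_zero, Fin.cons_succ,
      hinner]
    rw [Finset.sum_add_distrib, ← Finset.sum_mul, hw]
    push_cast
    ring

lemma sq_mul_sum_kpow_lt_abs_le (hw : IsProbVec w) (hf : ∑ i, w i * f i = 0) (n : ℕ) {t : ℝ}
    (ht : 0 ≤ t) :
    t ^ 2 * ∑ x with t < |∑ j, f (x j)|, kpow w n x ≤ n * ∑ i, w i * f i ^ 2 := by
  rw [← sum_kpow_mul_sum_sq hw.2 hf, Finset.mul_sum, Finset.sum_filter]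
  refine Finset.sum_le_sum fun x _ => ?_
  split_ifs with hx
  · rw [mul_comm]
    exact mul_le_mul_of_nonneg_left (sq_le_sq.2 (by rw [abs_of_nonneg ht]; exact hx.le))
      (kpow_nonneg hw.1 n x)
  · exact mul_nonneg (kpow_nonneg hw.1 n x) (sq_nonneg _)

lemma IsProbVec.sum_mul_sub_mean (hw : IsProbVec w) (f : ι → ℝ) :
    ∑ i, w i * (f i - ∑ j, w j * f j) = 0 := by
  simp only [mul_sub, Finset.sum_sub_distrib]
  rw [← Finset.sum_mul, hw.2, one_mul, sub_self]

lemma IsProbVec.sum_mul_sub_mean_sq_le (hw : IsProbVec w) {B : ℝ} (hB : ∀ i, |f i| ≤ B) :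
    ∑ i, w i * (f i - ∑ j, w j * f j) ^ 2 ≤ B ^ 2 := by
  set μ := ∑ j, w j * f j with hμ
  calc ∑ i, w i * (f i - μ) ^ 2
      = ∑ i, w i * f i ^ 2 - 2 * μ * ∑ i, w i * f i + (∑ i, w i) * μ ^ 2 := by
        rw [Finset.mul_sum, Finset.sum_mul, ← Finset.sum_sub_distrib, ← Finset.sum_add_distrib]
        exact Finset.sum_congr rfl fun i _ => by ring
    _ = ∑ i, w i * f i ^ 2 - μ ^ 2 := by
        rw [hw.2, ← hμ]
        ring
    _ ≤ ∑ i, w i * f i ^ 2 := sub_le_self _ (sq_nonneg μ)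
    _ ≤ ∑ i, w i * B ^ 2 := Finset.sum_le_sum fun i _ =>
        mul_le_mul_of_nonneg_left (sq_le_sq.2 ((hB i).trans (le_abs_self B))) (hw.1 i)
    _ = B ^ 2 := by rw [← Finset.sum_mul, hw.2, one_mul]

-- Uniformity in `w` matters: this is applied to the tilted vectors of all orders at once.
lemma eventually_half_le_sum_kpow (f : ι → ℝ) {η : ℝ} (hη : 0 < η) :
    ∀ᶠ n : ℕ in Filter.atTop, ∀ w : ι → ℝ, IsProbVec w →
      1 / 2 ≤ ∑ x with |∑ j, f (x j) - n * ∑ i, w i * f i| ≤ n * η, kpow w n x := by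
  set B := ∑ i, |f i|
  have hB : ∀ i, |f i| ≤ B := fun i =>
    Finset.single_le_sum (fun i _ => abs_nonneg (f i)) (Finset.mem_univ i)
  filter_upwards [Filter.eventually_gt_atTop 0,
    tendsto_natCast_atTop_atTop.eventually_ge_atTop (2 * B ^ 2 / η ^ 2)] with n hn hlarge w hw
  have hn₀ : (0 : ℝ) < n := by exact_mod_cast hn
  rw [div_le_iff₀ (by positivity)] at hlarge
  have hchebyshev := (sq_mul_sum_kpow_lt_abs_le hw (hw.sum_mul_sub_mean f) n
    (mul_nonneg hn₀.le hη.le)).trans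
      (mul_le_mul_of_nonneg_left (hw.sum_mul_sub_mean_sq_le hB) hn₀.le)
  simp only [Finset.sum_sub_distrib, Finset.sum_const, Finset.card_univ, Fintype.card_fin,
    nsmul_eq_mul] at hchebyshev
  have htotal := Finset.sum_filter_add_sum_filter_not Finset.univ
    (fun x : Fin n → ι => |∑ j, f (x j) - n * ∑ i, w i * f i| ≤ n * η) (kpow w n)
  rw [(isProbVec_kpow hw n).2] at htotal
  simp only [not_le] at htotal
  have htail : ∑ x with n * η < |∑ j, f (x j) - n * ∑ i, w i * f i|, kpow w n x ≤ 1 / 2 := by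
    refine le_of_mul_le_mul_left (hchebyshev.trans ?_) (by positivity : 0 < (n * η) ^ 2)
    calc n * B ^ 2 ≤ n * (n * η ^ 2 / 2) := by
          gcongr
          linarith
      _ = (n * η) ^ 2 * (1 / 2) := by ring
  linarith

end WeakLaw

section Tilting

variable {ι : Type*} [Fintype ι] {p : ι → ℝ} {α η : ℝ}

/-- The exponentially tilted (escort) vector of order `α`, with entries proportional to
`p i ^ α`. -/
def tilt (p : ι → ℝ) (α : ℝ) (i : ι) : ℝ := p i ^ α / fA α p

/-- The mean of `log p` under the tilted vector of order `α`. -/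
def tiltMean (p : ι → ℝ) (α : ℝ) : ℝ := ∑ i, tilt p α i * Real.log (p i)

/-- The words in the support of `p^{⊗n}` whose empirical mean of `log p` is within `η` of
`tiltMean p α`; they carry most of the mass of the tilted `n`-fold power. -/
def typicalSet (p : ι → ℝ) (α : ℝ) (n : ℕ) (η : ℝ) : Finset (Fin n → ι) :=
  Finset.univ.filter fun x =>
    kpow p n x ≠ 0 ∧ |∑ j, Real.log (p (x j)) - n * tiltMean p α| ≤ n * η

lemma isProbVec_tilt (hp : IsProbVec p) (hα : α ≠ 0) : IsProbVec (tilt p α) := by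
  refine ⟨fun i => div_nonneg (Real.rpow_nonneg (hp.1 i) α) (hp.fA_pos α).le, ?_⟩
  simp only [tilt]
  rw [← Finset.sum_div, ← fA_eq_sum_rpow hα, div_self (hp.fA_pos α).ne']

lemma log_fA_eq_H1ent_tilt_add (hp : IsProbVec p) (hα : α ≠ 0) :
    Real.log (fA α p) = H1ent (tilt p α) + α * tiltMean p α := by
  have hterm : ∀ i, tilt p α i * Real.log (tilt p α i) =
      α * (tilt p α i * Real.log (p i)) - tilt p α i * Real.log (fA α p) := fun i => by
    rcases (hp.1 i).eq_or_lt with hi | hi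
    · simp only [tilt, ← hi, Real.zero_rpow hα, zero_div, zero_mul, mul_zero, sub_zero]
    · rw [tilt, Real.log_div (Real.rpow_pos_of_pos hi α).ne' (hp.fA_pos α).ne', Real.log_rpow hi]
      ring
  simp only [H1ent, tiltMean, hterm]
  rw [Finset.sum_sub_distrib, ← Finset.mul_sum, ← Finset.sum_mul, (isProbVec_tilt hp hα).2]
  ring

lemma H1ent_eq_sum_negMulLog (p : ι → ℝ) : H1ent p = ∑ i, Real.negMulLog (p i) := by
  simp only [H1ent, Real.negMulLog, neg_mul, Finset.sum_neg_distrib]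

lemma H1ent_le_card (hp : ∀ i, 0 ≤ p i) : H1ent p ≤ Fintype.card ι := by
  rw [H1ent_eq_sum_negMulLog, ← nsmul_one, ← Finset.card_univ]
  exact Finset.sum_le_card_nsmul _ _ _ fun i _ =>
    (Real.negMulLog_le_one_sub_self (hp i)).trans (sub_le_self 1 (hp i))

lemma continuousOn_H1ent_tilt (hp : IsProbVec p) :
    ContinuousOn (fun α => H1ent (tilt p α)) {0}ᶜ := by
  have hrpow : ∀ i, ContinuousOn (fun α : ℝ => p i ^ α) {0}ᶜ := fun i α hα =>
    (Real.continuousAt_const_rpow' hα).continuousWithinAt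
  have hfA : ContinuousOn (fun α => fA α p) {0}ᶜ :=
    (continuousOn_finsetSum _ fun i _ => hrpow i).congr fun α hα => fA_eq_sum_rpow hα p
  simp only [H1ent_eq_sum_negMulLog, tilt]
  exact continuousOn_finsetSum _ fun i _ => Real.continuous_negMulLog.comp_continuousOn
    ((hrpow i).div hfA fun α _ => (hp.fA_pos α).ne')

lemma kpow_tilt (hp : ∀ i, 0 ≤ p i) (α : ℝ) (n : ℕ) (x : Fin n → ι) :
    kpow (tilt p α) n x = kpow p n x ^ α / fA α p ^ n := by
  rw [kpow_rpow hp]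
  simp only [kpow, tilt, Finset.prod_div_distrib, Finset.prod_const, Finset.card_univ,
    Fintype.card_fin]

lemma kpow_tilt_eq_exp (hp : IsProbVec p) (hα : α ≠ 0) {n : ℕ} {x : Fin n → ι}
    (hx : kpow p n x ≠ 0) :
    kpow (tilt p α) n x = Real.exp
      (α * (∑ j, Real.log (p (x j)) - n * tiltMean p α) - n * H1ent (tilt p α)) := by
  rw [kpow_tilt hp.1, kpow_eq_exp_sum_log hp.1 hx, ← Real.exp_mul,
    ← Real.exp_log (hp.fA_pos α), ← Real.exp_nat_mul, ← Real.exp_sub,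
    log_fA_eq_H1ent_tilt_add hp hα]
  congr 1
  ring

lemma eventually_half_le_sum_typicalSet (hp : IsProbVec p) (hη : 0 < η) :
    ∀ᶠ n : ℕ in Filter.atTop, ∀ α ≠ 0,
      1 / 2 ≤ ∑ x ∈ typicalSet p α n η, kpow (tilt p α) n x := by
  filter_upwards [eventually_half_le_sum_kpow (fun i => Real.log (p i)) hη] with n hn α hα
  refine (hn _ (isProbVec_tilt hp hα)).trans_eq (Finset.sum_subset ?_ fun x hx hx' => ?_).symm
  · exact Finset.monotone_filter_right _ fun x _ hx => hx.2
  · have hx₀ : kpow p n x = 0 := by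
      by_contra hne
      exact hx' (Finset.mem_filter.2 ⟨Finset.mem_univ x, hne, (Finset.mem_filter.1 hx).2⟩)
    rw [kpow_tilt hp.1, hx₀, Real.zero_rpow hα, zero_div]

lemma card_typicalSet_le (hp : IsProbVec p) (hα : 0 < α) (n : ℕ) :
    ((typicalSet p α n η).card : ℝ) ≤ Real.exp (n * (H1ent (tilt p α) + α * η)) := by
  have hentry : ∀ x ∈ typicalSet p α n η,
      Real.exp (-(n * (H1ent (tilt p α) + α * η))) ≤ kpow (tilt p α) n x := fun x hx => by
    obtain ⟨-, hx₀, hxη⟩ := Finset.mem_filter.1 hx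
    rw [kpow_tilt_eq_exp hp hα.ne' hx₀, Real.exp_le_exp]
    nlinarith [(abs_le.1 hxη).1]
  have hprob := isProbVec_kpow (isProbVec_tilt hp hα.ne') n
  have hsum := (Finset.card_nsmul_le_sum _ _ _ hentry).trans
    ((Finset.sum_le_univ_sum_of_nonneg hprob.1).trans_eq hprob.2)
  rwa [nsmul_eq_mul, Real.exp_neg, ← div_eq_mul_inv, div_le_one (Real.exp_pos _)] at hsum

lemma half_mul_exp_le_sum_typicalSet (hp : IsProbVec p) (hα : 1 ≤ α) {n : ℕ}
    (hmass : 1 / 2 ≤ ∑ x ∈ typicalSet p α n η, kpow (tilt p α) n x) :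
    1 / 2 * Real.exp (n * (H1ent (tilt p α) + tiltMean p α - (α - 1) * η)) ≤
      ∑ x ∈ typicalSet p α n η, kpow p n x := by
  refine (mul_le_mul_of_nonneg_right hmass (Real.exp_pos _).le).trans ?_
  rw [Finset.sum_mul]
  refine Finset.sum_le_sum fun x hx => ?_
  obtain ⟨-, hx₀, hxη⟩ := Finset.mem_filter.1 hx
  rw [kpow_tilt_eq_exp hp (by linarith) hx₀, kpow_eq_exp_sum_log hp.1 hx₀, ← Real.exp_add,
    Real.exp_le_exp]
  nlinarith [(abs_le.1 hxη).2]

lemma half_mul_exp_le_topSum_kpow (hp : IsProbVec p) (hα : 1 ≤ α) (hη : 0 ≤ η) {n k : ℕ} {κ : ℝ}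
    (hk : (k : ℝ) = Real.exp (n * κ))
    (hmass : 1 / 2 ≤ ∑ x ∈ typicalSet p α n η, kpow (tilt p α) n x) :
    1 / 2 * Real.exp (n * (κ + tiltMean p α + min (H1ent (tilt p α) - κ) 0 - 2 * α * η)) ≤
      topSum (kpow p n) k := by
  set h := H1ent (tilt p α)
  have hαη : 0 ≤ α * η := mul_nonneg (by linarith) hη
  -- the typical set is thinned by the factor `c`, so as to have about `k` elements
  set c := Real.exp (n * (κ - h + min (h - κ) 0 - α * η))
  have hc₁ : c ≤ 1 := Real.exp_le_one_iff.2 <|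
    mul_nonpos_of_nonneg_of_nonpos n.cast_nonneg (by linarith [min_le_left (h - κ) 0])
  have hcard : c * (typicalSet p α n η).card ≤ k := by
    refine (mul_le_mul_of_nonneg_left (card_typicalSet_le hp (by linarith) n)
      (Real.exp_pos _).le).trans ?_
    rw [hk, ← Real.exp_add, Real.exp_le_exp, ← mul_add]
    gcongr
    linarith [min_le_right (h - κ) 0]
  refine le_trans ?_ (mul_sum_le_topSum (kpow_nonneg hp.1 n) (Real.exp_pos _).le hc₁ hcard)
  refine le_trans ?_ (mul_le_mul_of_nonneg_left (half_mul_exp_le_sum_typicalSet hp hα hmass)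
    (Real.exp_pos _).le)
  rw [mul_left_comm, ← Real.exp_add, ← mul_add]
  gcongr
  linarith

lemma topSum_kpow_le_exp {κ' : Type*} [Fintype κ'] {q : κ' → ℝ} (hp : IsProbVec p)
    (hq : ∀ j, 0 ≤ q j) (hα : 1 ≤ α) (hqp : fA α q ≤ fA α p) {n k : ℕ} {κ : ℝ}
    (hk : (k : ℝ) = Real.exp (n * κ)) :
    topSum (kpow q n) k ≤
      Real.exp (n * (κ + tiltMean p α + (H1ent (tilt p α) - κ) / α)) := by
  have hα₀ : 0 < α := zero_lt_one.trans_le hα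
  have hfA : 0 ≤ fA α q := fA_nonneg hq α
  rw [← Real.rpow_le_rpow_iff (topSum_nonneg _ _) (Real.exp_pos _).le hα₀]
  calc topSum (kpow q n) k ^ α
      ≤ (k : ℝ) ^ (α - 1) * fA α q ^ n := by
        rw [← fA_kpow hα₀.ne' hq]
        exact topSum_rpow_le_mul_fA (kpow_nonneg hq n) hα k
    _ ≤ (k : ℝ) ^ (α - 1) * fA α p ^ n := by gcongr
    _ = Real.exp (n * (κ + tiltMean p α + (H1ent (tilt p α) - κ) / α)) ^ α := by
        rw [hk, ← Real.exp_log (hp.fA_pos α), ← Real.exp_nat_mul, ← Real.exp_mul,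
          ← Real.exp_mul, ← Real.exp_add, log_fA_eq_H1ent_tilt_add hp hα₀.ne']
        congr 1
        field_simp
        ring

-- For `f α = H1ent (tilt p α) - κ` this is the order at which the upper bound
-- `topSum_kpow_le_exp` and the lower bound `half_mul_exp_le_topSum_kpow` have matching rates.
lemma exists_div_sub_div_le_min {f : ℝ → ℝ} {A M : ℝ} (hA : 1 ≤ A) (hM : 0 ≤ M)
    (hf : ContinuousOn f (Set.Icc 1 A)) (hfM : f A ≤ M) :
    ∃ α ∈ Set.Icc 1 A, f α / α - M / A ≤ min (f α) 0 := by
  have hMA : 0 ≤ M / A := by positivity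
  rcases le_total (f 1) 0 with hleft | hleft
  · refine ⟨1, Set.left_mem_Icc.2 hA, ?_⟩
    rw [min_eq_left hleft, div_one]
    linarith
  rcases le_total 0 (f A) with hright | hright
  · refine ⟨A, Set.right_mem_Icc.2 hA, ?_⟩
    rw [min_eq_right hright, sub_nonpos]
    gcongr
  · obtain ⟨α, hα, hzero⟩ := intermediate_value_Icc' hA hf ⟨hright, hleft⟩
    refine ⟨α, hα, ?_⟩
    rw [hzero, zero_div, min_self]
    linarith

lemma topSum_kpow_le_two_mul_exp_mul {κ : Type*} [Fintype κ] {q : κ → ℝ} (hp : IsProbVec p)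
    (hq : ∀ j, 0 ≤ q j) {A : ℝ} (hA : 1 ≤ A) (hqp : ∀ α ∈ Set.Icc 1 A, fA α q ≤ fA α p)
    (hη : 0 ≤ η) {n : ℕ} (hn : n ≠ 0)
    (hmass : ∀ α ∈ Set.Icc 1 A, 1 / 2 ≤ ∑ x ∈ typicalSet p α n η, kpow (tilt p α) n x) (k : ℕ) :
    topSum (kpow q n) k ≤
      2 * Real.exp (n * (Fintype.card ι / A + 2 * A * η)) * topSum (kpow p n) k := by
  rcases k.eq_zero_or_pos with rfl | hk
  · simp only [topSum_zero, mul_zero, le_refl]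
  set τ := Real.log k / n
  have hτ : 0 ≤ τ := div_nonneg (Real.log_natCast_nonneg k) n.cast_nonneg
  have hkτ : (k : ℝ) = Real.exp (n * τ) := by
    rw [mul_div_cancel₀ _ (by exact_mod_cast hn), Real.exp_log (by exact_mod_cast hk)]
  obtain ⟨α, hα, hmin⟩ := exists_div_sub_div_le_min (f := fun α => H1ent (tilt p α) - τ) hA
    (Fintype.card ι).cast_nonneg
    (((continuousOn_H1ent_tilt hp).mono fun α hα => (zero_lt_one.trans_le hα.1).ne').sub
      continuousOn_const)
    (by linarith [H1ent_le_card (isProbVec_tilt hp (zero_lt_one.trans_le hA).ne').1])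
  set E := τ + tiltMean p α + min (H1ent (tilt p α) - τ) 0 - 2 * α * η with hE
  have hslack : α * η ≤ A * η := mul_le_mul_of_nonneg_right hα.2 hη
  calc topSum (kpow q n) k
      ≤ Real.exp (n * (τ + tiltMean p α + (H1ent (tilt p α) - τ) / α)) :=
        topSum_kpow_le_exp hp hq hα.1 (hqp α hα) hkτ
    _ ≤ Real.exp (n * (Fintype.card ι / A + 2 * A * η) + n * E) := by
        rw [← mul_add, Real.exp_le_exp]
        exact mul_le_mul_of_nonneg_left (by linarith [hE]) n.cast_nonneg
    _ = 2 * Real.exp (n * (Fintype.card ι / A + 2 * A * η)) * (1 / 2 * Real.exp (n * E)) := by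
        rw [Real.exp_add]
        ring
    _ ≤ 2 * Real.exp (n * (Fintype.card ι / A + 2 * A * η)) * topSum (kpow p n) k := by
        gcongr
        exact half_mul_exp_le_topSum_kpow hp hα.1 hη hkτ (hmass α hα)

lemma eventually_two_le_exp_mul {δ : ℝ} (hδ : 0 < δ) :
    ∀ᶠ n : ℕ in Filter.atTop, 2 ≤ Real.exp (n * δ) :=
  (Real.tendsto_exp_atTop.comp
    (tendsto_natCast_atTop_atTop.atTop_mul_const hδ)).eventually_ge_atTop 2

lemma eventually_topSum_kpow_le {κ : Type*} [Fintype κ] {q : κ → ℝ} (hp : IsProbVec p)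
    (hq : ∀ j, 0 ≤ q j) (hqp : ∀ α, 1 ≤ α → fA α q ≤ fA α p) {δ : ℝ} (hδ : 0 < δ) :
    ∀ᶠ n : ℕ in Filter.atTop, ∀ k,
      topSum (kpow q n) k ≤ Real.exp (n * δ) * topSum (kpow p n) k := by
  set A : ℝ := 1 + 4 * Fintype.card ι / δ with hA
  have hA₁ : 1 ≤ A := le_add_of_nonneg_right (by positivity)
  have hrate : Fintype.card ι / A + 2 * A * (δ / (8 * A)) ≤ δ / 2 := by
    have hcard : Fintype.card ι / A ≤ δ / 4 := by
      have hδA : δ * A = δ + 4 * Fintype.card ι := by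
        rw [hA, mul_add, mul_one, mul_div_cancel₀ _ hδ.ne']
      rw [div_le_iff₀ (by positivity)]
      linarith
    have hη : 2 * A * (δ / (8 * A)) = δ / 4 := by
      field_simp
      norm_num
    linarith
  filter_upwards [eventually_half_le_sum_typicalSet hp (η := δ / (8 * A)) (by positivity),
    Filter.eventually_ne_atTop 0, eventually_two_le_exp_mul (half_pos hδ)] with n hmass hn htwo k
  refine (topSum_kpow_le_two_mul_exp_mul hp hq hA₁ (fun α hα => hqp α hα.1) (by positivity) hn
    (fun α hα => hmass α (zero_lt_one.trans_le hα.1).ne') k).trans ?_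
  refine mul_le_mul_of_nonneg_right ?_ (topSum_nonneg _ k)
  calc 2 * Real.exp (n * (Fintype.card ι / A + 2 * A * (δ / (8 * A))))
      ≤ Real.exp (n * (δ / 2)) * Real.exp (n * (δ / 2)) := by gcongr
    _ = Real.exp (n * δ) := by rw [← Real.exp_add, ← mul_add, add_halves]

end Tilting

section Spreading

variable {m : ℕ} {q : Fin m → ℝ} {c : ℝ}

/-- The vector `q` scaled by `c`, followed by its missing mass `1 - c` spread evenly over `N` new
entries. -/
def spread (q : Fin m → ℝ) (c : ℝ) (N : ℕ) : Fin (m + N) → ℝ :=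
  Fin.append (fun i => c * q i) fun _ => (1 - c) / N

lemma spread_castAdd (q : Fin m → ℝ) (c : ℝ) (N : ℕ) (i : Fin m) :
    spread q c N (Fin.castAdd N i) = c * q i :=
  Fin.append_left _ _ i

lemma spread_natAdd (q : Fin m → ℝ) (c : ℝ) {N : ℕ} (j : Fin N) :
    spread q c N (Fin.natAdd m j) = (1 - c) / N :=
  Fin.append_right _ _ j

lemma isProbVec_spread (hq : IsProbVec q) (hc₀ : 0 ≤ c) (hc₁ : c ≤ 1) {N : ℕ} (hN : N ≠ 0) :
    IsProbVec (spread q c N) := by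
  refine ⟨fun i => ?_, ?_⟩
  · induction i using Fin.addCases with
    | left i =>
      rw [spread_castAdd]
      exact mul_nonneg hc₀ (hq.1 i)
    | right j =>
      rw [spread_natAdd]
      exact div_nonneg (sub_nonneg.2 hc₁) N.cast_nonneg
  · simp only [Fin.sum_univ_add, spread_castAdd, spread_natAdd, Finset.sum_const, Finset.card_univ,
      Fintype.card_fin, nsmul_eq_mul]
    rw [← Finset.mul_sum, hq.2, mul_div_cancel₀ _ (by exact_mod_cast hN), mul_one, add_sub_cancel]

lemma l1PadDist_spread (hq : IsProbVec q) (hc₁ : c ≤ 1) {N : ℕ} (hN : N ≠ 0) :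
    l1PadDist q (spread q c N) = 2 * (1 - c) := by
  have hc : 0 ≤ 1 - c := sub_nonneg.2 hc₁
  have hentry : ∀ i, |q i - c * q i| = (1 - c) * q i := fun i => by
    rw [← one_sub_mul, abs_of_nonneg (mul_nonneg hc (hq.1 i))]
  simp only [spread, l1PadDist_append, hentry, abs_of_nonneg (div_nonneg hc N.cast_nonneg),
    Finset.sum_const, Finset.card_univ, Fintype.card_fin, nsmul_eq_mul]
  rw [← Finset.mul_sum, hq.2, mul_div_cancel₀ _ (by exact_mod_cast hN)]
  ring

lemma kpow_spread_comp_castAdd (q : Fin m → ℝ) (c : ℝ) (N n : ℕ) (x : Fin n → Fin m) :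
    kpow (spread q c N) n (Fin.castAdd N ∘ x) = c ^ n * kpow q n x := by
  simp only [kpow, Function.comp_apply, spread_castAdd, Finset.prod_mul_distrib, Finset.prod_const,
    Finset.card_univ, Fintype.card_fin]

lemma kpow_spread_le_one_div (hq : IsProbVec q) (hc₀ : 0 ≤ c) (hc₁ : c ≤ 1) {N n : ℕ}
    {x : Fin n → Fin (m + N)} (hx : ∀ y : Fin n → Fin m, Fin.castAdd N ∘ y ≠ x) :
    kpow (spread q c N) n x ≤ 1 / N := by
  obtain ⟨j, l, hl⟩ : ∃ j, ∃ l : Fin N, Fin.natAdd m l = x j := by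
    by_contra! hnew
    have hold : ∀ j, ∃ i : Fin m, Fin.castAdd N i = x j := fun j => by
      generalize hxj : x j = l
      induction l using Fin.addCases with
      | left i => exact ⟨i, rfl⟩
      | right l => exact (hnew j l hxj.symm).elim
    choose y hy using hold
    exact hx y (funext hy)
  have hN : N ≠ 0 := (Fin.pos l).ne'
  calc kpow (spread q c N) n x ≤ spread q c N (x j) := (isProbVec_spread hq hc₀ hc₁ hN).kpow_le x j
    _ = (1 - c) / N := by rw [← hl, spread_natAdd]
    _ ≤ 1 / N := by
        gcongr
        linarith

lemma topSum_kpow_spread_le (hq : IsProbVec q) (hc₀ : 0 ≤ c) (hc₁ : c ≤ 1) (N n k : ℕ) :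
    topSum (kpow (spread q c N) n) k ≤ c ^ n * topSum (kpow q n) k + k * (1 / N) := by
  let f : (Fin n → Fin m) ↪ (Fin n → Fin (m + N)) :=
    ⟨(Fin.castAdd N ∘ ·), (Fin.castAdd_injective m N).comp_left⟩
  have hcomp : kpow (spread q c N) n ∘ f = fun x => c ^ n * kpow q n x :=
    funext (kpow_spread_comp_castAdd q c N n)
  rw [← topSum_const_mul (pow_nonneg hc₀ n), ← hcomp]
  exact topSum_le_topSum_comp_add f (by positivity)
    (fun x hx => kpow_spread_le_one_div hq hc₀ hc₁ fun y hy => hx ⟨y, hy⟩) k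

end Spreading

section Equivalence

variable {ι : Type*} [Fintype ι] {m : ℕ} {p : ι → ℝ} {q : Fin m → ℝ}

lemma exists_majorizes_kpow_spread (hp : IsProbVec p) (hq : IsProbVec q) {c : ℝ} (hc₀ : 0 ≤ c)
    (hc₁ : c ≤ 1) {n : ℕ} (h : ∀ k, c ^ n * topSum (kpow q n) k ≤ topSum (kpow p n) k / 2) :
    ∃ N ≠ 0, Majorizes (kpow p n) (kpow (spread q c N) n) := by
  have hpn := isProbVec_kpow hp n
  have hN : 2 * Fintype.card (Fin n → ι) ≠ 0 := mul_ne_zero two_ne_zero hpn.card_pos.ne'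
  refine ⟨_, hN, majorizes_of_topSum_le_midpoint hpn
    (isProbVec_kpow (isProbVec_spread hq hc₀ hc₁ hN) n) fun k => ?_⟩
  calc topSum (kpow (spread q c (2 * Fintype.card (Fin n → ι))) n) k
      ≤ c ^ n * topSum (kpow q n) k + k * (1 / (2 * Fintype.card (Fin n → ι) : ℕ)) :=
        topSum_kpow_spread_le hq hc₀ hc₁ _ n k
    _ ≤ topSum (kpow p n) k / 2 + k * (1 / (2 * Fintype.card (Fin n → ι) : ℕ)) := by
        gcongr
        exact h k
    _ = (topSum (kpow p n) k + k / Fintype.card (Fin n → ι)) / 2 := by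
        rw [Nat.cast_mul, Nat.cast_ofNat]
        ring

lemma exists_majorizes_kpow_of_fA_le (hp : IsProbVec p) (hq : IsProbVec q)
    (hqp : ∀ α, 1 ≤ α → fA α q ≤ fA α p) {ε : ℝ} (hε : 0 < ε) :
    ∃ (m'' : ℕ) (q' : Fin m'' → ℝ), IsProbVec q' ∧ l1PadDist q q' ≤ ε ∧
      ∃ n : ℕ, 1 ≤ n ∧ Majorizes (kpow p n) (kpow q' n) := by
  set c := Real.exp (-(ε / 2))
  have hc₁ : c ≤ 1 := Real.exp_le_one_iff.2 (by linarith)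
  have hcε : 2 * (1 - c) ≤ ε := by linarith [Real.add_one_le_exp (-(ε / 2))]
  obtain ⟨n, hn, hδ, htwo⟩ := ((Filter.eventually_ge_atTop 1).and
    ((eventually_topSum_kpow_le hp hq.1 hqp (δ := ε / 4) (by positivity)).and
      (eventually_two_le_exp_mul (δ := ε / 4) (by positivity)))).exists
  have hcn : c ^ n = Real.exp (-(n * (ε / 4))) * Real.exp (-(n * (ε / 4))) := by
    rw [← Real.exp_nat_mul, ← Real.exp_add]
    congr 1
    ring
  have hhalf : Real.exp (-(n * (ε / 4))) ≤ 1 / 2 := by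
    rw [Real.exp_neg, ← one_div]
    exact one_div_le_one_div_of_le two_pos htwo
  have hdominated : ∀ k, c ^ n * topSum (kpow q n) k ≤ topSum (kpow p n) k / 2 := fun k => by
    calc c ^ n * topSum (kpow q n) k
        ≤ c ^ n * (Real.exp (n * (ε / 4)) * topSum (kpow p n) k) := by
          gcongr
          exact hδ k
      _ = Real.exp (-(n * (ε / 4))) * topSum (kpow p n) k := by
          rw [hcn, Real.exp_neg]
          field_simp
      _ ≤ 1 / 2 * topSum (kpow p n) k :=
          mul_le_mul_of_nonneg_right hhalf (topSum_nonneg _ k)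
      _ = topSum (kpow p n) k / 2 := by ring
  obtain ⟨N, hN, hmaj⟩ := exists_majorizes_kpow_spread hp hq (Real.exp_pos _).le hc₁ hdominated
  exact ⟨_, spread q c N, isProbVec_spread hq (Real.exp_pos _).le hc₁ hN,
    (l1PadDist_spread hq hc₁ hN).trans_le hcε, n, hn, hmaj⟩

lemma fA_le_of_majorizes_kron {ι κ μ : Type*} [Fintype ι] [Fintype κ] [Fintype μ] {p : ι → ℝ}
    {q : κ → ℝ} {r : μ → ℝ} (hp : ∀ i, 0 ≤ p i) (hq : ∀ j, 0 ≤ q j) (hr : IsProbVec r)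
    (h : Majorizes (kron p r) (kron q r)) {α : ℝ} (hα : 1 ≤ α) : fA α q ≤ fA α p := by
  have hα₀ : α ≠ 0 := (zero_lt_one.trans_le hα).ne'
  have hkron := h.fA_le (kron_nonneg hp hr.1) (kron_nonneg hq hr.1) hα
  rw [fA_kron hα₀ hp hr.1, fA_kron hα₀ hq hr.1] at hkron
  exact le_of_mul_le_mul_right hkron (hr.fA_pos α)

lemma fA_le_of_forall_exists_majorizes_kron (hp : ∀ i, 0 ≤ p i) (hq : IsProbVec q)
    (h : ∀ ε : ℝ, 0 < ε → ∃ (m'' : ℕ) (q' : Fin m'' → ℝ), IsProbVec q' ∧ l1PadDist q q' ≤ ε ∧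
      ∃ (ρ : ℕ) (r : Fin ρ → ℝ), IsProbVec r ∧ Majorizes (kron p r) (kron q' r))
    {α : ℝ} (hα : 1 ≤ α) : fA α q ≤ fA α p := by
  have hα₀ : 0 < α := zero_lt_one.trans_le hα
  refine le_of_forall_pos_le_add fun ε hε => ?_
  obtain ⟨m'', q', hq', hdist, ρ, r, hr, hmaj⟩ := h (ε / α) (div_pos hε hα₀)
  calc fA α q ≤ fA α q' + α * l1PadDist q q' := fA_le_fA_add_mul_l1PadDist hq hq' hα
    _ ≤ fA α p + α * (ε / α) := by
        gcongr
        exact fA_le_of_majorizes_kron hp hq'.1 hr hmaj hα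
    _ = fA α p + ε := by rw [mul_div_cancel₀ _ hα₀.ne']

end Equivalence

/-- **Aubrun–Nechita.**  For finite probability vectors `p, q`, approximate
asymptotic majorization, approximate catalytic majorization, and the ordering
`f_α(p) ≥ f_α(q)` for all `α ≥ 1` are equivalent. -/
theorem aubrun_nechita
    {m m' : ℕ} (p : Fin m → ℝ) (q : Fin m' → ℝ)
    (hp : IsProbVec p) (hq : IsProbVec q) :
    ((∀ ε : ℝ, 0 < ε →
        ∃ (m'' : ℕ) (q' : Fin m'' → ℝ), IsProbVec q' ∧ l1PadDist q q' ≤ ε ∧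
          ∃ nn : ℕ, 1 ≤ nn ∧ Majorizes (kpow p nn) (kpow q' nn)) ↔
      (∀ ε : ℝ, 0 < ε →
        ∃ (m'' : ℕ) (q' : Fin m'' → ℝ), IsProbVec q' ∧ l1PadDist q q' ≤ ε ∧
          ∃ (ρ : ℕ) (r : Fin ρ → ℝ), IsProbVec r ∧
            Majorizes (kron p r) (kron q' r))) ∧
    ((∀ ε : ℝ, 0 < ε →
        ∃ (m'' : ℕ) (q' : Fin m'' → ℝ), IsProbVec q' ∧ l1PadDist q q' ≤ ε ∧
          ∃ (ρ : ℕ) (r : Fin ρ → ℝ), IsProbVec r ∧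
            Majorizes (kron p r) (kron q' r)) ↔
      (∀ α : ℝ, 1 ≤ α → fA α q ≤ fA α p)) := by
  have hcatalyst : ∀ {m'' : ℕ} {q' : Fin m'' → ℝ}, IsProbVec q' →
      (∃ n : ℕ, 1 ≤ n ∧ Majorizes (kpow p n) (kpow q' n)) →
        ∃ (ρ : ℕ) (r : Fin ρ → ℝ), IsProbVec r ∧ Majorizes (kron p r) (kron q' r) :=
    fun hq' ⟨_, hn, h⟩ =>
      exists_catalyst_of_majorizes_kpow hp hq' (Nat.one_le_iff_ne_zero.1 hn) h
  refine ⟨⟨fun h ε hε => ?_, fun h ε hε => ?_⟩, fun h α hα => ?_, fun h ε hε => ?_⟩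
  · obtain ⟨m'', q', hq', hdist, hmaj⟩ := h ε hε
    exact ⟨m'', q', hq', hdist, hcatalyst hq' hmaj⟩
  · exact exists_majorizes_kpow_of_fA_le hp hq
      (fun α hα => fA_le_of_forall_exists_majorizes_kron hp.1 hq h hα) hε
  · exact fA_le_of_forall_exists_majorizes_kron hp.1 hq h hα
  · obtain ⟨m'', q', hq', hdist, hmaj⟩ := exists_majorizes_kpow_of_fA_le hp hq h hε
    exact ⟨m'', q', hq', hdist, hcatalyst hq' hmaj⟩
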